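/- arXiv:0906.3700 — 5 statements merged into one kernel-verified Lean document; each statement's English description precedes it below -/
import Mathlib

section
/- For every f ∈ S(ℝ), the series Σ_{n ∈ ℤ} f(φ + θn)·exp(2πi n ψ) converges absolutely for every (φ, ψ) ∈ ℝ², the resulting function Φf : ℝ² → ℂ is infinitely differentiable, and it satisfies the quasi-periodicity relations Φf(φ + θ, ψ) = exp(−2πi ψ)·Φf(φ, ψ) and Φf(φ, ψ + 1) = Φf(φ, ψ) for all (φ, ψ) ∈ ℝ². -/
open Complex SchwartzMap

/-- The transform `Φf(φ, ψ) = Σ_{n ∈ ℤ} f(φ + θn) · exp(2πi n ψ)`. -/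
noncomputable def Phi (θ : ℝ) (f : SchwartzMap ℝ ℂ) : ℝ × ℝ → ℂ :=
  fun p => ∑' n : ℤ, f (p.1 + θ * n) * Complex.exp (2 * Real.pi * Complex.I * n * p.2)

/-!
Differentiating the series in `ψ` produces a factor `n`, which `θ n = (φ + θ n) - φ` absorbs into
the Schwartz function. With `(x f)(x) = x * f x` this gives
`∂_φ Φf = Φ(f')` and `∂_ψ Φf = (2πi / θ) (Φ(x f) - φ Φf)`.
The derivatives of `Φf` are thus built from transforms of Schwartz functions again, so smoothness
follows by induction once `Φf` is known to be differentiable for every `f`. The latter only needs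
the series `Σ ‖f(φ + θ n)‖` to converge locally uniformly in `φ`.
-/

section Decay

variable {E F : Type*} [NormedAddCommGroup E]

theorem one_add_norm_le_one_add_norm_mul_one_add_norm_add (x v : E) :
    1 + ‖v‖ ≤ (1 + ‖x‖) * (1 + ‖x + v‖) := by
  have triangle : ‖v‖ ≤ ‖x + v‖ + ‖x‖ := by simpa using norm_sub_le (x + v) x
  nlinarith [mul_nonneg (norm_nonneg x) (norm_nonneg (x + v))]

variable [NormedSpace ℝ E] [NormedAddCommGroup F] [NormedSpace ℝ F]

theorem exists_one_add_norm_pow_mul_norm_le (f : 𝓢(E, F)) (k : ℕ) :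
    ∃ C, 0 ≤ C ∧ ∀ x, (1 + ‖x‖) ^ k * ‖f x‖ ≤ C :=
  ⟨2 ^ k * (Finset.Iic (k, 0)).sup (fun m => SchwartzMap.seminorm ℝ m.1 m.2) f, by positivity,
    fun x => by
      simpa only [norm_iteratedFDeriv_zero] using
        SchwartzMap.one_add_le_sup_seminorm_apply (𝕜 := ℝ) (m := (k, 0)) le_rfl le_rfl f x⟩

theorem exists_norm_apply_add_le (f : 𝓢(E, F)) (k : ℕ) :
    ∃ C, 0 ≤ C ∧ ∀ x v, ‖f (x + v)‖ ≤ C * (1 + ‖x‖) ^ k * ((1 + ‖v‖) ^ k)⁻¹ := by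
  obtain ⟨C, hC₀, hC⟩ := exists_one_add_norm_pow_mul_norm_le f k
  refine ⟨C, hC₀, fun x v => ?_⟩
  rw [← div_eq_mul_inv, le_div_iff₀ (by positivity)]
  calc ‖f (x + v)‖ * (1 + ‖v‖) ^ k
      ≤ ‖f (x + v)‖ * ((1 + ‖x‖) * (1 + ‖x + v‖)) ^ k := by
        gcongr
        exact one_add_norm_le_one_add_norm_mul_one_add_norm_add x v
    _ = (1 + ‖x + v‖) ^ k * ‖f (x + v)‖ * (1 + ‖x‖) ^ k := by rw [mul_pow]; ring
    _ ≤ C * (1 + ‖x‖) ^ k := by gcongr; exact hC _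

theorem summable_inv_one_add_norm_mul_int_pow {θ : ℝ} (hθ : θ ≠ 0) {k : ℕ} (hk : 1 < k) :
    Summable fun n : ℤ => ((1 + ‖θ * n‖) ^ k)⁻¹ := by
  have majorant : Summable fun n : ℤ => (|θ| ^ k)⁻¹ * |1 / (n : ℝ) ^ k| :=
    (Real.summable_one_div_int_pow.2 hk).abs.mul_left _
  refine majorant.of_norm_bounded_eventually ?_
  filter_upwards [(Set.finite_singleton (0 : ℤ)).eventually_cofinite_notMem] with n hn
  have hn₀ : n ≠ 0 := hn
  rw [Real.norm_of_nonneg (by positivity), abs_div, abs_one, abs_pow, one_div, ← mul_inv,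
    ← mul_pow, ← abs_mul, Real.norm_eq_abs]
  gcongr
  exact le_add_of_nonneg_left zero_le_one

end Decay

/-- The product of a Schwartz function with the coordinate function, `x ↦ x * f x`. -/
noncomputable def coordMul (f : 𝓢(ℝ, ℂ)) : 𝓢(ℝ, ℂ) :=
  smulLeftCLM ℂ ofRealCLM f

theorem coordMul_apply (f : 𝓢(ℝ, ℂ)) (x : ℝ) : coordMul f x = x * f x :=
  smulLeftCLM_apply_apply ofRealCLM.hasTemperateGrowth f x

/-- The `n`-th term of the series defining `Phi θ f`, as a function on the plane. -/
noncomputable def phiTerm (θ : ℝ) (f : 𝓢(ℝ, ℂ)) (n : ℤ) (p : ℝ × ℝ) : ℂ :=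
  f (p.1 + θ * n) * exp (2 * Real.pi * I * n * p.2)

/-- The differential `dφ` of the first coordinate of the plane, with complex values. -/
noncomputable def dFst : ℝ × ℝ →L[ℝ] ℂ := ofRealCLM ∘L ContinuousLinearMap.fst ℝ ℝ ℝ

/-- The differential `dψ` of the second coordinate of the plane, with complex values. -/
noncomputable def dSnd : ℝ × ℝ →L[ℝ] ℂ := ofRealCLM ∘L ContinuousLinearMap.snd ℝ ℝ ℝ

theorem norm_dFst_le : ‖dFst‖ ≤ 1 :=
  ContinuousLinearMap.opNorm_le_bound _ zero_le_one fun p => by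
    simpa [dFst] using norm_fst_le p

theorem norm_dSnd_le : ‖dSnd‖ ≤ 1 :=
  ContinuousLinearMap.opNorm_le_bound _ zero_le_one fun p => by
    simpa [dSnd] using norm_snd_le p

section Term

variable (θ : ℝ) (f : 𝓢(ℝ, ℂ)) (n : ℤ) (p : ℝ × ℝ)

theorem norm_phiTerm : ‖phiTerm θ f n p‖ = ‖f (p.1 + θ * n)‖ := by
  have phase : 2 * Real.pi * I * n * p.2 = ((2 * Real.pi * n * p.2 : ℝ) : ℂ) * I := by
    push_cast; ring
  rw [phiTerm, norm_mul, phase, norm_exp_ofReal_mul_I, mul_one]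

theorem mul_int_mul_phiTerm :
    θ * n * phiTerm θ f n p = phiTerm θ (coordMul f) n p - p.1 * phiTerm θ f n p := by
  simp only [phiTerm, coordMul_apply]
  push_cast
  ring

theorem hasFDerivAt_phiTerm :
    HasFDerivAt (phiTerm θ f n)
      (phiTerm θ (derivCLM ℂ ℂ f) n p • dFst + (2 * Real.pi * I * n * phiTerm θ f n p) • dSnd)
      p := by
  have h_shift : HasFDerivAt (fun q : ℝ × ℝ => f (q.1 + θ * n))
      (deriv f (p.1 + θ * n) • dFst) p := by
    refine ((f.hasDerivAt (p.1 + θ * n)).hasFDerivAt.comp p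
      (hasFDerivAt_fst.add_const (θ * n))).congr_fderiv ?_
    ext <;> simp [dFst]
  have h_phase : HasFDerivAt (fun q : ℝ × ℝ => 2 * Real.pi * I * n * q.2)
      ((2 * Real.pi * I * n) • dSnd) p :=
    dSnd.hasFDerivAt.const_mul (2 * Real.pi * I * n)
  refine (h_shift.mul h_phase.cexp).congr_fderiv ?_
  simp only [phiTerm, derivCLM_apply, smul_smul]
  rw [add_comm]
  congr 2 <;> ring

variable {θ}

theorem hasFDerivAt_phiTerm_of_ne_zero (hθ : θ ≠ 0) :
    HasFDerivAt (phiTerm θ f n)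
      (phiTerm θ (derivCLM ℂ ℂ f) n p • dFst +
        (2 * Real.pi * I / θ * (phiTerm θ (coordMul f) n p - p.1 * phiTerm θ f n p)) • dSnd) p := by
  convert hasFDerivAt_phiTerm θ f n p using 3
  have hθ' : (θ : ℂ) ≠ 0 := ofReal_ne_zero.2 hθ
  rw [← mul_int_mul_phiTerm]
  field_simp

end Term

section Series

variable {θ : ℝ}

theorem exists_summable_norm_phiTerm_le (hθ : θ ≠ 0) (f : 𝓢(ℝ, ℂ)) (R : ℝ) :
    ∃ u : ℤ → ℝ, Summable u ∧ ∀ n, ∀ p ∈ Metric.ball (0 : ℝ × ℝ) R, ‖phiTerm θ f n p‖ ≤ u n := by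
  obtain ⟨C, hC₀, hC⟩ := exists_norm_apply_add_le f 2
  refine ⟨fun n => C * (1 + R) ^ 2 * ((1 + ‖θ * n‖) ^ 2)⁻¹,
    (summable_inv_one_add_norm_mul_int_pow hθ one_lt_two).mul_left _, fun n p hp => ?_⟩
  have hp₁ : ‖p.1‖ ≤ R := (norm_fst_le p).trans (mem_ball_zero_iff.1 hp).le
  calc ‖phiTerm θ f n p‖ = ‖f (p.1 + θ * n)‖ := norm_phiTerm θ f n p
    _ ≤ C * (1 + ‖p.1‖) ^ 2 * ((1 + ‖θ * n‖) ^ 2)⁻¹ := hC p.1 (θ * n)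
    _ ≤ C * (1 + R) ^ 2 * ((1 + ‖θ * n‖) ^ 2)⁻¹ := by gcongr

theorem summable_norm_phiTerm (hθ : θ ≠ 0) (f : 𝓢(ℝ, ℂ)) (p : ℝ × ℝ) :
    Summable fun n => ‖phiTerm θ f n p‖ := by
  obtain ⟨u, hu, hfu⟩ := exists_summable_norm_phiTerm_le hθ f (‖p‖ + 1)
  exact hu.of_nonneg_of_le (fun _ => norm_nonneg _) fun n => hfu n p (by simp)

theorem hasSum_phiTerm (hθ : θ ≠ 0) (f : 𝓢(ℝ, ℂ)) (p : ℝ × ℝ) :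
    HasSum (fun n => phiTerm θ f n p) (Phi θ f p) :=
  (summable_norm_phiTerm hθ f p).of_norm.hasSum

theorem exists_summable_norm_fderiv_phiTerm_le (hθ : θ ≠ 0) (f : 𝓢(ℝ, ℂ)) (R : ℝ) :
    ∃ u : ℤ → ℝ, Summable u ∧
      ∀ n, ∀ p ∈ Metric.ball (0 : ℝ × ℝ) R, ‖fderiv ℝ (phiTerm θ f n) p‖ ≤ u n := by
  obtain ⟨u, hu, hfu⟩ := exists_summable_norm_phiTerm_le hθ f R
  obtain ⟨v, hv, hfv⟩ := exists_summable_norm_phiTerm_le hθ (derivCLM ℂ ℂ f) R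
  obtain ⟨w, hw, hfw⟩ := exists_summable_norm_phiTerm_le hθ (coordMul f) R
  set c : ℂ := 2 * Real.pi * I / θ
  refine ⟨fun n => v n + ‖c‖ * (w n + R * u n),
    hv.add ((hw.add (hu.mul_left R)).mul_left ‖c‖), fun n p hp => ?_⟩
  have hp₁ : ‖(p.1 : ℂ)‖ ≤ R := by
    rw [norm_real]
    exact (norm_fst_le p).trans (mem_ball_zero_iff.1 hp).le
  rw [(hasFDerivAt_phiTerm_of_ne_zero f n p hθ).fderiv]
  calc _ ≤ ‖phiTerm θ (derivCLM ℂ ℂ f) n p‖ * ‖dFst‖ +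
        ‖c * (phiTerm θ (coordMul f) n p - p.1 * phiTerm θ f n p)‖ * ‖dSnd‖ := by
        simp only [← norm_smul]
        exact norm_add_le _ _
    _ ≤ ‖phiTerm θ (derivCLM ℂ ℂ f) n p‖ +
        ‖c * (phiTerm θ (coordMul f) n p - p.1 * phiTerm θ f n p)‖ :=
        add_le_add (mul_le_of_le_one_right (norm_nonneg _) norm_dFst_le)
          (mul_le_of_le_one_right (norm_nonneg _) norm_dSnd_le)
    _ ≤ ‖phiTerm θ (derivCLM ℂ ℂ f) n p‖ +
        ‖c‖ * (‖phiTerm θ (coordMul f) n p‖ + ‖(p.1 : ℂ)‖ * ‖phiTerm θ f n p‖) := by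
        rw [norm_mul, ← norm_mul (p.1 : ℂ)]
        gcongr
        exact norm_sub_le _ _
    _ ≤ v n + ‖c‖ * (w n + R * u n) := by
        gcongr
        exacts [hfv n p hp, hfw n p hp, (norm_nonneg _).trans hp₁, hfu n p hp]

theorem hasFDerivAt_Phi (hθ : θ ≠ 0) (f : 𝓢(ℝ, ℂ)) (p : ℝ × ℝ) :
    HasFDerivAt (Phi θ f)
      (Phi θ (derivCLM ℂ ℂ f) p • dFst +
        (2 * Real.pi * I / θ * (Phi θ (coordMul f) p - p.1 * Phi θ f p)) • dSnd) p := by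
  obtain ⟨u, hu, hfu⟩ := exists_summable_norm_fderiv_phiTerm_le hθ f (‖p‖ + 1)
  have hp : p ∈ Metric.ball (0 : ℝ × ℝ) (‖p‖ + 1) := by simp
  have h_tsum : HasFDerivAt (Phi θ f) (∑' n, fderiv ℝ (phiTerm θ f n) p) p :=
    hasFDerivAt_tsum_of_isPreconnected hu Metric.isOpen_ball (convex_ball _ _).isPreconnected
      (fun n q _ => (hasFDerivAt_phiTerm θ f n q).differentiableAt.hasFDerivAt) hfu hp
      (hasSum_phiTerm hθ f p).summable hp
  refine h_tsum.congr_fderiv (HasSum.tsum_eq ?_)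
  simp only [(hasFDerivAt_phiTerm_of_ne_zero f _ p hθ).fderiv]
  exact ((hasSum_phiTerm hθ (derivCLM ℂ ℂ f) p).smul_const dFst).add
    ((((hasSum_phiTerm hθ (coordMul f) p).sub ((hasSum_phiTerm hθ f p).mul_left _)).mul_left
      _).smul_const dSnd)

theorem contDiff_Phi_nat (hθ : θ ≠ 0) (f : 𝓢(ℝ, ℂ)) (k : ℕ) : ContDiff ℝ k (Phi θ f) := by
  induction k generalizing f with
  | zero =>
    exact contDiff_zero.2 (continuous_iff_continuousAt.2 fun p =>
      (hasFDerivAt_Phi hθ f p).continuousAt)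
  | succ k ih =>
    refine contDiff_succ_iff_hasFDerivAt.2 ⟨_, ?_, hasFDerivAt_Phi hθ f⟩
    have h_fst : ContDiff ℝ k fun p : ℝ × ℝ => (p.1 : ℂ) := dFst.contDiff
    exact ((ih _).smul contDiff_const).add
      ((contDiff_const.mul ((ih _).sub (h_fst.mul (ih f)))).smul contDiff_const)

theorem contDiff_Phi (hθ : θ ≠ 0) (f : 𝓢(ℝ, ℂ)) : ContDiff ℝ (⊤ : ℕ∞) (Phi θ f) :=
  contDiff_infty.2 (contDiff_Phi_nat hθ f)

end Series

section QuasiPeriodicity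

variable (θ : ℝ) (f : 𝓢(ℝ, ℂ)) (φ ψ : ℝ)

theorem Phi_add_theta_left :
    Phi θ f (φ + θ, ψ) = exp (-(2 * Real.pi * I * ψ)) * Phi θ f (φ, ψ) := by
  have h_term (n : ℤ) : phiTerm θ f n (φ + θ, ψ) =
      exp (-(2 * Real.pi * I * ψ)) * phiTerm θ f (n + 1) (φ, ψ) := by
    rw [phiTerm, phiTerm, mul_left_comm, ← Complex.exp_add]
    push_cast
    congr 2 <;> ring
  calc Phi θ f (φ + θ, ψ)
      = ∑' n, exp (-(2 * Real.pi * I * ψ)) * phiTerm θ f (n + 1) (φ, ψ) := tsum_congr h_term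
    _ = exp (-(2 * Real.pi * I * ψ)) * ∑' n, phiTerm θ f (n + 1) (φ, ψ) := tsum_mul_left
    _ = exp (-(2 * Real.pi * I * ψ)) * Phi θ f (φ, ψ) :=
      congrArg _ ((Equiv.addRight (1 : ℤ)).tsum_eq fun n => phiTerm θ f n (φ, ψ))

theorem Phi_add_one_right : Phi θ f (φ, ψ + 1) = Phi θ f (φ, ψ) := by
  refine tsum_congr fun n => congrArg (f (φ + θ * n) * ·) ?_
  exact Complex.exp_eq_exp_iff_exists_int.2 ⟨n, by push_cast; ring⟩

end QuasiPeriodicity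

theorem stmt1_general {θ : ℝ} (hθ : θ ≠ 0) (f : SchwartzMap ℝ ℂ) :
    (∀ φ ψ : ℝ, Summable fun n : ℤ =>
        ‖f (φ + θ * n) * Complex.exp (2 * Real.pi * Complex.I * n * ψ)‖)
    ∧ ContDiff ℝ (⊤ : ℕ∞) (Phi θ f)
    ∧ (∀ φ ψ : ℝ, Phi θ f (φ + θ, ψ)
        = Complex.exp (-(2 * Real.pi * Complex.I * ψ)) * Phi θ f (φ, ψ))
    ∧ (∀ φ ψ : ℝ, Phi θ f (φ, ψ + 1) = Phi θ f (φ, ψ)) :=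
  ⟨fun φ ψ => summable_norm_phiTerm hθ f (φ, ψ), contDiff_Phi hθ f, Phi_add_theta_left θ f,
    Phi_add_one_right θ f⟩

theorem stmt1 (θ : ℝ) (hθ0 : 0 < θ) (hθ1 : θ ≤ 1) (f : SchwartzMap ℝ ℂ) :
    (∀ φ ψ : ℝ, Summable fun n : ℤ =>
        ‖f (φ + θ * n) * Complex.exp (2 * Real.pi * Complex.I * n * ψ)‖)
    ∧ ContDiff ℝ (⊤ : ℕ∞) (Phi θ f)
    ∧ (∀ φ ψ : ℝ, Phi θ f (φ + θ, ψ)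
        = Complex.exp (-(2 * Real.pi * Complex.I * ψ)) * Phi θ f (φ, ψ))
    ∧ (∀ φ ψ : ℝ, Phi θ f (φ, ψ + 1) = Phi θ f (φ, ψ)) :=
  stmt1_general hθ0.ne' f
end

section
/- For every f ∈ S(ℝ) and every x ∈ ℝ, one has the inversion formula ∫₀¹ Φf(θ·{x/θ}, ψ)·exp(−2πi ⌊x/θ⌋ ψ) dψ = f(x), where ⌊x/θ⌋ and {x/θ} denote the integer and fractional parts of x/θ. In particular, the linear map f ↦ Φf is injective on S(ℝ). -/
open Complex SchwartzMap

/-!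
For fixed `φ`, the function `ψ ↦ Φf(φ, ψ)` is the sum of an absolutely convergent Fourier series
whose `m`-th coefficient is `f (φ + θ m)`. Integrating against `exp (-2πi m ψ)` recovers that
coefficient, and every real `x` has the form `φ + θ m` with `φ = θ {x/θ}` and `m = ⌊x/θ⌋`.
-/

open Filter MeasureTheory AddCircle

section FourierSeries

variable {T : ℝ}

lemma norm_fourier_apply (n : ℤ) (x : AddCircle T) : ‖fourier n x‖ = 1 :=
  Circle.norm_coe _

variable [Fact (0 < T)] {E : Type*} [NormedAddCommGroup E] [NormedSpace ℂ E]

lemma hasSum_fourierCoeff_tsum {ι : Type*} [Countable ι] {F : ι → AddCircle T → E}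
    (hF : ∀ i, Integrable (F i) haarAddCircle)
    (hsum : Summable fun i ↦ ∫ x, ‖F i x‖ ∂haarAddCircle) (m : ℤ) :
    HasSum (fun i ↦ fourierCoeff (F i) m) (fourierCoeff (fun x ↦ ∑' i, F i x) m) := by
  simp only [fourierCoeff, ← tsum_const_smul'']
  refine hasSum_integral_of_summable_integral_norm (fun i ↦ (hF i).fourier_smul (-m)) ?_
  simpa only [norm_smul, norm_fourier_apply, one_mul] using hsum

variable [CompleteSpace E]

lemma fourierCoeff_fourier_smul_const (n m : ℤ) (c : E) :
    fourierCoeff (fun x : AddCircle T ↦ fourier n x • c) m = if n = m then c else 0 := by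
  calc fourierCoeff (fun x : AddCircle T ↦ fourier n x • c) m
      = fourierCoeff (fourier n : AddCircle T → ℂ) m • c := by
        simp only [fourierCoeff, smul_smul, smul_eq_mul, integral_smul_const]
    _ = if n = m then c else 0 := by
        rw [fourierCoeff_fourier, Pi.single_apply, ite_smul, one_smul, zero_smul]
        simp only [eq_comm]

theorem fourierCoeff_tsum_fourier_smul {c : ℤ → E} (hc : Summable fun n ↦ ‖c n‖) (m : ℤ) :
    fourierCoeff (fun x : AddCircle T ↦ ∑' n, fourier n x • c n) m = c m := by
  have integrable_term (n : ℤ) :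
      Integrable (fun x : AddCircle T ↦ fourier n x • c n) haarAddCircle :=
    (integrable_const (c n)).fourier_smul n
  have summable_integral_norm :
      Summable fun n ↦ ∫ x : AddCircle T, ‖fourier n x • c n‖ ∂haarAddCircle := by
    simpa only [norm_smul, norm_fourier_apply, one_mul, integral_const, probReal_univ,
      one_smul] using hc
  have termwise := hasSum_fourierCoeff_tsum integrable_term summable_integral_norm m
  simp only [fourierCoeff_fourier_smul_const] at termwise
  rw [← termwise.tsum_eq, tsum_ite_eq]

end FourierSeries

section Sampling

variable {θ : ℝ}

lemma tendsto_add_mul_intCast_cofinite_cocompact (hθ : θ ≠ 0) (a : ℝ) :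
    Tendsto (fun n : ℤ ↦ a + θ * n) cofinite (cocompact ℝ) :=
  ((Homeomorph.mulLeft₀ θ hθ).trans (Homeomorph.addLeft a)).isClosedEmbedding.tendsto_cocompact.comp
    Int.tendsto_coe_cofinite

lemma summable_abs_add_mul_intCast_rpow_neg (hθ : θ ≠ 0) (a : ℝ) {s : ℝ} (hs : 1 < s) :
    Summable fun n : ℤ ↦ |a + θ * n| ^ (-s) := by
  have factor (n : ℤ) : |a + θ * n| ^ (-s) = |θ| ^ (-s) * (1 / |n + a / θ| ^ s) := by
    rw [one_div, ← Real.rpow_neg (abs_nonneg _), ← Real.mul_rpow (abs_nonneg _) (abs_nonneg _),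
      ← abs_mul, mul_add, mul_div_cancel₀ _ hθ, add_comm]
  simpa only [factor] using ((Real.summable_one_div_int_add_rpow (a / θ) s).mpr hs).mul_left _

lemma summable_norm_schwartzMap_add_mul_intCast {F : Type*} [NormedAddCommGroup F]
    [NormedSpace ℝ F] (hθ : θ ≠ 0) (f : 𝓢(ℝ, F)) (a : ℝ) :
    Summable fun n : ℤ ↦ ‖f (a + θ * n)‖ :=
  summable_of_isBigO (summable_abs_add_mul_intCast_rpow_neg hθ a one_lt_two)
    ((f.isBigO_cocompact_rpow (-2)).comp_tendsto
      (tendsto_add_mul_intCast_cofinite_cocompact hθ a)).norm_left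

end Sampling

section Inversion

variable {θ : ℝ}

lemma Phi_eq_tsum_fourier_smul (f : 𝓢(ℝ, ℂ)) (φ ψ : ℝ) :
    Phi θ f (φ, ψ) = ∑' n : ℤ, fourier n (ψ : UnitAddCircle) • f (φ + θ * n) := by
  simp only [Phi, fourier_coe_apply, ofReal_one, div_one, smul_eq_mul, mul_comm (f _)]

theorem integral_Phi_mul_exp_neg (hθ : θ ≠ 0) (f : 𝓢(ℝ, ℂ)) (φ : ℝ) (m : ℤ) :
    ∫ ψ in (0 : ℝ)..1, Phi θ f (φ, ψ) * exp (-(2 * Real.pi * I * m * ψ)) = f (φ + θ * m) := by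
  have exp_eq_fourier (ψ : ℝ) :
      exp (-(2 * Real.pi * I * m * ψ)) = fourier (-m) (ψ : UnitAddCircle) := by
    rw [fourier_coe_apply]
    push_cast
    ring_nf
  calc ∫ ψ in (0 : ℝ)..1, Phi θ f (φ, ψ) * exp (-(2 * Real.pi * I * m * ψ))
      = fourierCoeff (fun x : UnitAddCircle ↦ ∑' n : ℤ, fourier n x • f (φ + θ * n)) m := by
        simp only [fourierCoeff_eq_intervalIntegral _ m 0, Phi_eq_tsum_fourier_smul,
          exp_eq_fourier, zero_add, div_one, one_smul, smul_eq_mul, mul_comm (fourier (-m) _)]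
    _ = f (φ + θ * m) :=
        fourierCoeff_tsum_fourier_smul (summable_norm_schwartzMap_add_mul_intCast hθ f φ) m

theorem integral_Phi_fract_mul_exp_neg_floor (hθ : θ ≠ 0) (f : 𝓢(ℝ, ℂ)) (x : ℝ) :
    ∫ ψ in (0 : ℝ)..1, Phi θ f (θ * Int.fract (x / θ), ψ)
      * exp (-(2 * Real.pi * I * (⌊x / θ⌋ : ℤ) * ψ)) = f x := by
  rw [integral_Phi_mul_exp_neg hθ, ← mul_add, Int.fract_add_floor, mul_div_cancel₀ _ hθ]

theorem Phi_injective (hθ : θ ≠ 0) : Function.Injective (Phi θ) := by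
  intro f g hfg
  ext x
  rw [← integral_Phi_fract_mul_exp_neg_floor hθ f x, hfg,
    integral_Phi_fract_mul_exp_neg_floor hθ g x]

end Inversion

theorem stmt2_general (θ : ℝ) (hθ : θ ≠ 0) :
    (∀ f : SchwartzMap ℝ ℂ, ∀ x : ℝ,
      (∫ ψ in (0:ℝ)..1,
        Phi θ f (θ * Int.fract (x / θ), ψ)
          * Complex.exp (-(2 * Real.pi * Complex.I * (⌊x / θ⌋ : ℤ) * ψ))) = f x)
    ∧ Function.Injective (fun f : SchwartzMap ℝ ℂ => Phi θ f) :=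
  ⟨integral_Phi_fract_mul_exp_neg_floor hθ, Phi_injective hθ⟩

theorem stmt2 (θ : ℝ) (hθ0 : 0 < θ) (hθ1 : θ ≤ 1) :
    (∀ f : SchwartzMap ℝ ℂ, ∀ x : ℝ,
      (∫ ψ in (0:ℝ)..1,
        Phi θ f (θ * Int.fract (x / θ), ψ)
          * Complex.exp (-(2 * Real.pi * Complex.I * (⌊x / θ⌋ : ℤ) * ψ))) = f x)
    ∧ Function.Injective (fun f : SchwartzMap ℝ ℂ => Phi θ f) :=
  stmt2_general θ hθ0.ne'
end

section
/- For every f ∈ S(ℝ) and every (φ, ψ) ∈ ℝ², one has Φ(f′)(φ, ψ) = (∂Φf/∂φ)(φ, ψ); that is, the map Φ intertwines the operator −i d/dx on S(ℝ) with the operator −i ∂/∂φ on functions on ℝ². -/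
open Complex SchwartzMap

open Asymptotics Filter Metric TopologicalSpace

theorem summable_norm_restrict_comp_addRight_mul_int {E : Type*} [NormedAddCommGroup E]
    (f : C(ℝ, E)) {b : ℝ} (hb : 1 < b) (hf : f =O[cocompact ℝ] fun x : ℝ => |x| ^ (-b))
    {θ : ℝ} (hθ : θ ≠ 0) (K : Compacts ℝ) :
    Summable fun n : ℤ => ‖(f.comp (ContinuousMap.addRight (θ * n))).restrict K‖ := by
  have tendsto_lattice : Tendsto (fun n : ℤ => θ * n) cofinite (cocompact ℝ) :=
    (tendsto_cocompact_mul_left₀ hθ).comp Int.tendsto_coe_cofinite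
  have summable_lattice : Summable fun n : ℤ => |θ * n| ^ (-b) := by
    simpa only [abs_mul, Real.mul_rpow (abs_nonneg _) (abs_nonneg _)] using
      (Real.summable_abs_int_rpow hb).mul_left (|θ| ^ (-b))
  exact summable_of_isBigO summable_lattice
    ((isBigO_norm_restrict_cocompact f (zero_lt_one.trans hb) hf K).comp_tendsto tendsto_lattice)

theorem exists_summable_norm_comp_add_mul_int_le {E : Type*} [NormedAddCommGroup E]
    {f : ℝ → E} (hfc : Continuous f) {b : ℝ} (hb : 1 < b)
    (hf : f =O[cocompact ℝ] fun x : ℝ => |x| ^ (-b)) {θ : ℝ} (hθ : θ ≠ 0)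
    {K : Set ℝ} (hK : IsCompact K) :
    ∃ u : ℤ → ℝ, Summable u ∧ ∀ n : ℤ, ∀ x ∈ K, ‖f (x + θ * n)‖ ≤ u n := by
  let F : C(ℝ, E) := ⟨f, hfc⟩
  let L : Compacts ℝ := ⟨K, hK⟩
  refine ⟨_, summable_norm_restrict_comp_addRight_mul_int F hb hf hθ L, fun n x hx => ?_⟩
  exact ((F.comp (ContinuousMap.addRight (θ * n))).restrict (L : Set ℝ)).norm_coe_le_norm ⟨x, hx⟩

theorem hasDerivAt_tsum_comp_add_mul_int_mul {A : Type*} [NormedRing A] [NormedAlgebra ℝ A]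
    [CompleteSpace A] {f f' : ℝ → A} (hderiv : ∀ x, HasDerivAt f (f' x) x)
    (hf'c : Continuous f') {b : ℝ} (hb : 1 < b)
    (hf : f =O[cocompact ℝ] fun x : ℝ => |x| ^ (-b))
    (hf' : f' =O[cocompact ℝ] fun x : ℝ => |x| ^ (-b)) {θ : ℝ} (hθ : θ ≠ 0)
    {c : ℤ → A} {C : ℝ} (hc : ∀ n, ‖c n‖ ≤ C) (x : ℝ) :
    HasDerivAt (fun t => ∑' n : ℤ, f (t + θ * n) * c n) (∑' n : ℤ, f' (x + θ * n) * c n) x := by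
  have hfc : Continuous f := continuous_iff_continuousAt.2 fun y => (hderiv y).continuousAt
  have norm_mul_coeff_le {a : A} {r : ℝ} (n : ℤ) (ha : ‖a‖ ≤ r) : ‖a * c n‖ ≤ r * C :=
    norm_mul_le_of_le ha (hc n)
  obtain ⟨u, hu, hfu⟩ :=
    exists_summable_norm_comp_add_mul_int_le hfc hb hf hθ (isCompact_singleton (x := x))
  obtain ⟨v, hv, hf'v⟩ :=
    exists_summable_norm_comp_add_mul_int_le hf'c hb hf' hθ (isCompact_closedBall x 1)
  have summable_at : Summable fun n : ℤ => f (x + θ * n) * c n :=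
    .of_norm_bounded (hu.mul_right C) fun n => norm_mul_coeff_le n (hfu n x rfl)
  have hasDerivAt_term (n : ℤ) (y : ℝ) :
      HasDerivAt (fun t => f (t + θ * n) * c n) (f' (y + θ * n) * c n) y :=
    ((hderiv _).comp_add_const y (θ * n)).mul_const (c n)
  have hx : x ∈ ball x 1 := mem_ball_self one_pos
  exact hasDerivAt_tsum_of_isPreconnected (hv.mul_right C) isOpen_ball
    (convex_ball x 1).isPreconnected (fun n y _ => hasDerivAt_term n y)
    (fun n y hy => norm_mul_coeff_le n (hf'v n y (ball_subset_closedBall hy))) hx summable_at hx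

theorem stmt4_general {θ : ℝ} (hθ : θ ≠ 0) {f f' : SchwartzMap ℝ ℂ}
    (hf' : ∀ x : ℝ, f' x = deriv f x) (φ ψ : ℝ) :
    HasDerivAt (fun t : ℝ => Phi θ f (t, ψ)) (Phi θ f' (φ, ψ)) φ := by
  have norm_phase_le (n : ℤ) : ‖exp (2 * Real.pi * I * n * ψ)‖ ≤ 1 := by
    simp [norm_exp]
  exact hasDerivAt_tsum_comp_add_mul_int_mul (fun x => hf' x ▸ f.hasDerivAt x) f'.continuous
    one_lt_two (f.isBigO_cocompact_rpow (-2)) (f'.isBigO_cocompact_rpow (-2)) hθ norm_phase_le φ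

theorem stmt4 (θ : ℝ) (hθ0 : 0 < θ) (hθ1 : θ ≤ 1) (f f' : SchwartzMap ℝ ℂ)
    (hf' : ∀ x : ℝ, f' x = deriv (⇑f) x) :
    ∀ φ ψ : ℝ, Phi θ f' (φ, ψ) = deriv (fun t : ℝ => Phi θ f (t, ψ)) φ :=
  fun φ ψ => (stmt4_general hθ0.ne' hf' φ ψ).deriv.symm
end

section
/- Suppose f, g : ℝ → ℝ satisfy the Rieffel conditions: for all x ∈ ℝ, (i) g(x)·g(x+1) = 0, (ii) g(x)·(f(x) + f(x+1)) = g(x), (iii) f(x) − f(x)² = g(x)² + g(x−1)². Then the operator P defined by (P u)(x) = g(x−1)·u(x−1) + f(x)·u(x) + g(x)·u(x+1), acting on complex-valued functions on ℝ, is idempotent: P ∘ P = P. -/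
open Complex

/-- The Rieffel operator `P = U⁻¹g + f + gU`:
`(P u)(x) = g(x−1)·u(x−1) + f(x)·u(x) + g(x)·u(x+1)`. -/
noncomputable def rieffelOp (f g : ℝ → ℝ) : (ℝ → ℂ) → (ℝ → ℂ) :=
  fun u x => (g (x - 1) : ℂ) * u (x - 1) + (f x : ℂ) * u x + (g x : ℂ) * u (x + 1)

/-!
In any ring containing the coefficients and a unit `U` with `U a = σ(a) U`, expand the square of
`U⁻¹ g + f + g U` and collect terms by their degree in `U`. The degree `±2` parts vanish because
`g σ(g) = 0`, the degree `±1` parts are unchanged because `g (f + σ(f)) = g`, and the degree `0`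
part is `f² + g² + σ⁻¹(g)² = f`. Functions on `ℝ`, acting by multiplication, together with the
shift by `1` are such a system.
-/

theorem isIdempotentElem_add_add {R : Type*} [NonUnitalNonAssocSemiring R] {a b c : R}
    (haa : a * a = 0) (hab : a * b + b * a = a) (h₀ : a * c + b * b + c * a = b)
    (hbc : b * c + c * b = c) (hcc : c * c = 0) : IsIdempotentElem (a + b + c) :=
  calc (a + b + c) * (a + b + c)
      = a * a + (a * b + b * a) + (a * c + b * b + c * a) + (b * c + c * b) + c * c := by
        simp only [mul_add, add_mul]; abel
    _ = a + b + c := by rw [haa, hab, h₀, hbc, hcc, zero_add, add_zero]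

section Covariant

variable {A E : Type*} [CommSemiring A] [Semiring E]

/-- The Rieffel element `U⁻¹ g + f + g U` of a ring `E`, where the coefficients `f` and `g` act
through `π : A →+* E`. -/
def rieffelElement (π : A →+* E) (U : Eˣ) (f g : A) : E :=
  ↑U⁻¹ * π g + π f + π g * U

variable {π : A →+* E} {U : Eˣ} {σ : RingAut A} {f g : A}

theorem map_mul_unit_mul_self_eq_zero (hU : ∀ a, SemiconjBy (U : E) (π a) (π (σ a)))
    (hg : g * σ g = 0) : (π g * U) * (π g * U) = 0 :=
  calc (π g * U) * (π g * U) = π g * (U * π g) * U := by simp only [mul_assoc]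
    _ = π (g * σ g) * U * U := by rw [(hU g).eq, map_mul]; simp only [mul_assoc]
    _ = 0 := by rw [hg, map_zero, zero_mul, zero_mul]

theorem inv_unit_mul_map_mul_self_eq_zero (hU : ∀ a, SemiconjBy (U : E) (π a) (π (σ a)))
    (hg : g * σ g = 0) : (↑U⁻¹ * π g) * (↑U⁻¹ * π g) = 0 :=
  calc (↑U⁻¹ * π g) * (↑U⁻¹ * π g) = ↑U⁻¹ * (π g * ↑U⁻¹) * π g := by simp only [mul_assoc]
    _ = ↑U⁻¹ * ↑U⁻¹ * π (g * σ g) := by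
        rw [← (hU g).units_inv_symm_left.eq, mul_comm g, map_mul]; simp only [mul_assoc]
    _ = 0 := by rw [hg, map_zero, mul_zero]

theorem map_mul_map_mul_unit_add (hU : ∀ a, SemiconjBy (U : E) (π a) (π (σ a)))
    (hfg : g * (f + σ f) = g) : π f * (π g * U) + (π g * U) * π f = π g * U :=
  calc π f * (π g * U) + (π g * U) * π f
      = π f * π g * U + π g * (U * π f) := by simp only [mul_assoc]
    _ = π (f * g + g * σ f) * U := by
        rw [(hU f).eq, map_add, map_mul, map_mul, add_mul, mul_assoc (π g)]
    _ = π g * U := by rw [mul_comm f, ← mul_add, hfg]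

theorem inv_unit_mul_map_mul_map_add (hU : ∀ a, SemiconjBy (U : E) (π a) (π (σ a)))
    (hfg : g * (f + σ f) = g) : (↑U⁻¹ * π g) * π f + π f * (↑U⁻¹ * π g) = ↑U⁻¹ * π g :=
  calc (↑U⁻¹ * π g) * π f + π f * (↑U⁻¹ * π g)
      = ↑U⁻¹ * (π g * π f) + (π f * ↑U⁻¹) * π g := by simp only [mul_assoc]
    _ = ↑U⁻¹ * π (g * f + σ f * g) := by
        rw [← (hU f).units_inv_symm_left.eq, map_add, map_mul, map_mul, mul_add, mul_assoc _ (π _)]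
    _ = ↑U⁻¹ * π g := by rw [mul_comm (σ f), ← mul_add, hfg]

theorem inv_unit_mul_map_mul_unit (hU : ∀ a, SemiconjBy (U : E) (π a) (π (σ a))) (a : A) :
    ↑U⁻¹ * π a * U = π (σ.symm a) := by
  have h := (hU (σ.symm a)).units_inv_symm_left.eq
  rw [σ.apply_symm_apply] at h
  rw [h, Units.inv_mul_cancel_right]

end Covariant

section RieffelConditions

variable {A E : Type*} [CommRing A] [Semiring E]
  {π : A →+* E} {U : Eˣ} {σ : RingAut A} {f g : A}

theorem degree_zero_part_rieffelElement_mul_self (hU : ∀ a, SemiconjBy (U : E) (π a) (π (σ a)))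
    (hf : f - f ^ 2 = g ^ 2 + σ.symm g ^ 2) :
    (↑U⁻¹ * π g) * (π g * U) + π f * π f + (π g * U) * (↑U⁻¹ * π g) = π f :=
  calc (↑U⁻¹ * π g) * (π g * U) + π f * π f + (π g * U) * (↑U⁻¹ * π g)
      = ↑U⁻¹ * π (g ^ 2) * U + π (f ^ 2) + π (g ^ 2) := by
        simp only [sq, map_mul, mul_assoc, Units.mul_inv_cancel_left]
    _ = π (σ.symm g ^ 2 + f ^ 2 + g ^ 2) := by
        rw [inv_unit_mul_map_mul_unit hU, map_pow σ.symm, map_add, map_add]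
    _ = π f := by congr 1; linear_combination -hf

theorem stmt8_general (hU : ∀ a, SemiconjBy (U : E) (π a) (π (σ a)))
    (hg : g * σ g = 0) (hfg : g * (f + σ f) = g) (hf : f - f ^ 2 = g ^ 2 + σ.symm g ^ 2) :
    IsIdempotentElem (rieffelElement π U f g) :=
  isIdempotentElem_add_add (inv_unit_mul_map_mul_self_eq_zero hU hg)
    (inv_unit_mul_map_mul_map_add hU hfg) (degree_zero_part_rieffelElement_mul_self hU hf)
    (map_mul_map_mul_unit_add hU hfg) (map_mul_unit_mul_self_eq_zero hU hg)

end RieffelConditions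

section Composition

variable {X : Type*}

/-- The automorphism `a ↦ a ∘ T` of the ring of `K`-valued functions on `X`. -/
def compRingAut (K : Type*) [Semiring K] (T : Equiv.Perm X) : RingAut (X → K) where
  toEquiv := T.symm.arrowCongr (Equiv.refl K)
  map_mul' _ _ := rfl
  map_add' _ _ := rfl

/-- The composition operator `u ↦ u ∘ T` on `M`-valued functions, as a unit of the ring of linear
endomorphisms. -/
def compUnit (R M : Type*) [Semiring R] [AddCommMonoid M] [Module R M] (T : Equiv.Perm X) :
    (Module.End R (X → M))ˣ :=
  LinearMap.GeneralLinearGroup.ofLinearEquiv (LinearEquiv.funCongrLeft R M T)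

variable {R K M : Type*} [Semiring R] [Semiring K] [AddCommMonoid M] [Module R M] [Module K M]
  [SMulCommClass R K M]

instance smulCommClass_pi_left : SMulCommClass (X → K) R (X → M) :=
  SMulCommClass.symm R (X → K) (X → M)

theorem semiconjBy_compUnit_toModuleEnd (T : Equiv.Perm X) (a : X → K) :
    SemiconjBy (compUnit R M T : Module.End R (X → M)) (Module.toModuleEnd R (X → M) a)
      (Module.toModuleEnd R (X → M) (compRingAut K T a)) :=
  rfl

end Composition

theorem rieffelOp_eq_rieffelElement (f g : ℝ → ℝ) :
    rieffelOp f g = rieffelElement (Module.toModuleEnd ℂ (ℝ → ℂ))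
      (compUnit ℂ ℂ (Equiv.subRight (1 : ℝ)).symm) f g :=
  rfl

theorem stmt8 (f g : ℝ → ℝ)
    (h1 : ∀ x : ℝ, g x * g (x + 1) = 0)
    (h2 : ∀ x : ℝ, g x * (f x + f (x + 1)) = g x)
    (h3 : ∀ x : ℝ, f x - (f x) ^ 2 = (g x) ^ 2 + (g (x - 1)) ^ 2) :
    rieffelOp f g ∘ rieffelOp f g = rieffelOp f g := by
  rw [rieffelOp_eq_rieffelElement]
  have hU := semiconjBy_compUnit_toModuleEnd (R := ℂ) (K := ℝ) (M := ℂ)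
    (Equiv.subRight (1 : ℝ)).symm
  exact congrArg DFunLike.coe (stmt8_general hU (funext h1) (funext h2) (funext h3))
end

section
/- Let θ be a real number with 0 < θ ≤ 1 such that 1/θ is not an integer. Then there exist infinitely differentiable θ-periodic functions f, g : ℝ → ℝ with 0 ≤ f ≤ 1 satisfying, for all x ∈ ℝ: (i) g(x)·g(x+1) = 0, (ii) g(x)·(f(x) + f(x+1)) = g(x), (iii) f(x) − f(x)² = g(x)² + g(x−1)², and moreover (1/θ)·∫₀^θ f(x) dx = {1/θ}, where {1/θ} denotes the fractional part of 1/θ. -/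
open Complex

/-!
Rescaling by `θ` turns the problem into one about `1`-periodic functions and the rotation by
`ρ = {1/θ}`; if `ρ = 0` then `f = g = 0` will do. Otherwise let `B` be a smooth staircase,
`B (y + 1) = B y + 1`, which climbs only on the intervals `[n, n + δ]`, where
`δ ≤ min ρ (1 - ρ)`, with profile `s = sin² a`. Then `f y = B y - B (y - ρ)` is a bump that rises
along `s` and falls along `1 - s (· - ρ)`, and `g = sin a * cos a` satisfies `g² = s - s²`. The
smallness of `δ` keeps `g` and `g (· - ρ)` from overlapping, and the mean of `f` is the mean
displacement of the staircase under the shift, `ρ`.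
-/

open Set MeasureTheory

section Staircase

variable {E : Type*} [AddCommGroup E] {c : E} {s : ℝ → E} {δ : ℝ}

/-- The staircase with step height `c` whose profile on each `[n, n + 1)` is that of `s` on
`[0, 1)`. For `c = 0` it is the `1`-periodic extension of `s` restricted to `[0, 1)`. -/
noncomputable def staircase (c : E) (s : ℝ → E) (y : ℝ) : E := ⌊y⌋ • c + s (Int.fract y)

lemma staircase_zero (s : ℝ → E) : staircase 0 s = fun y => s (Int.fract y) := by
  ext y
  rw [staircase, smul_zero, zero_add]

lemma staircase_add_one (c : E) (s : ℝ → E) (y : ℝ) :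
    staircase c s (y + 1) = staircase c s y + c := by
  simp only [staircase, Int.floor_add_one, Int.fract_add_one, add_smul, one_smul]
  abel

lemma staircase_eq_of_mem_Ioo (hs0 : ∀ y ≤ 0, s y = 0) (hs1 : ∀ y, δ ≤ y → s y = c)
    (hδ : 0 ≤ δ) {n : ℤ} {y : ℝ} (hy : y ∈ Ioo (n - 1 + δ : ℝ) (n + 1)) :
    staircase c s y = n • c + s (y - n) := by
  obtain ⟨hy_left, hy_right⟩ := hy
  rcases le_or_gt (n : ℝ) y with hny | hyn
  · have hfloor : ⌊y⌋ = n := Int.floor_eq_iff.2 ⟨hny, hy_right⟩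
    rw [staircase, Int.fract, hfloor]
  · have hfloor : ⌊y⌋ = n - 1 :=
      Int.floor_eq_iff.2 ⟨by push_cast; linarith, by push_cast; linarith⟩
    have hfract : δ ≤ Int.fract y := by
      rw [Int.fract, hfloor]; push_cast; linarith
    rw [staircase, hs1 _ hfract, hs0 _ (by linarith), hfloor, sub_smul, one_smul]
    abel

end Staircase

section Calculus

variable {E : Type*} [NormedAddCommGroup E] [NormedSpace ℝ E] {c : E}

lemma contDiff_staircase {s : ℝ → E} {δ : ℝ} {m : WithTop ℕ∞} (hs : ContDiff ℝ m s)
    (hs0 : ∀ y ≤ 0, s y = 0) (hs1 : ∀ y, δ ≤ y → s y = c) (hδ : δ ∈ Ico (0 : ℝ) 1) :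
    ContDiff ℝ m (staircase c s) := by
  refine contDiff_iff_contDiffAt.2 fun y => ?_
  have hsmooth : ContDiff ℝ m fun z : ℝ => ⌊y⌋ • c + s (z - ⌊y⌋) := by fun_prop
  have hnhds : Ioo (⌊y⌋ - 1 + δ : ℝ) (⌊y⌋ + 1) ∈ nhds y :=
    Ioo_mem_nhds (by linarith [hδ.2, Int.floor_le y]) (Int.lt_floor_add_one y)
  refine hsmooth.contDiffAt.congr_of_eventuallyEq ?_
  filter_upwards [hnhds] with z hz
  exact staircase_eq_of_mem_Ioo hs0 hs1 hδ.1 hz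

lemma integral_sub_comp_sub_of_add_eq [CompleteSpace E] {B : ℝ → E} {T : ℝ}
    (hB : ∀ a b, IntervalIntegrable B volume a b) (hadd : ∀ y, B (y + T) = B y + c) (ρ : ℝ) :
    ∫ y in 0..T, (B y - B (y - ρ)) = ρ • c := by
  have hB_shift : IntervalIntegrable (fun y => B (y - ρ)) volume 0 T := by
    simpa using (hB (0 - ρ) (T - ρ)).comp_sub_right ρ
  calc ∫ y in 0..T, (B y - B (y - ρ))
      = (∫ y in 0..T, B y) - ∫ y in (0 - ρ)..(T - ρ), B y := by
        rw [intervalIntegral.integral_sub (hB 0 T) hB_shift,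
          intervalIntegral.integral_comp_sub_right]
    _ = (∫ y in 0..(0 - ρ), B y) - ∫ y in T..(T - ρ), B y :=
        intervalIntegral.integral_interval_sub_interval_comm (hB _ _) (hB _ _) (hB _ _)
    _ = (∫ y in 0..(0 - ρ), B y) - ∫ y in 0..(0 - ρ), B (y + T) := by
        rw [intervalIntegral.integral_comp_add_right]; ring_nf
    _ = ρ • c := by
        simp only [hadd]
        rw [intervalIntegral.integral_add (hB _ _) intervalIntegrable_const]
        simp

end Calculus

/-- `s` is a smooth ramp from `0` to `1` climbing on `[0, δ]`, and `k` is a smooth square root of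
`s - s²`: the profiles on `[0, 1)` from which a Rieffel pair is built. -/
structure IsSmoothRamp (δ : ℝ) (s k : ℝ → ℝ) : Prop where
  contDiff : ContDiff ℝ (⊤ : ℕ∞) s
  contDiff_root : ContDiff ℝ (⊤ : ℕ∞) k
  root_sq : ∀ y, k y ^ 2 = s y - s y ^ 2
  eq_zero : ∀ y ≤ 0, s y = 0
  eq_one : ∀ y, δ ≤ y → s y = 1

lemma exists_isSmoothRamp {δ : ℝ} (hδ : 0 < δ) : ∃ s k, IsSmoothRamp δ s k := by
  let a : ℝ → ℝ := fun y => Real.pi / 2 * Real.smoothTransition (y / δ)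
  have ha : ContDiff ℝ (⊤ : ℕ∞) a :=
    contDiff_const.mul (Real.smoothTransition.contDiff.comp (contDiff_id.div_const δ))
  refine ⟨fun y => Real.sin (a y) ^ 2, fun y => Real.sin (a y) * Real.cos (a y),
    ha.sin.pow 2, ha.sin.mul ha.cos, fun y => ?_, fun y hy => ?_, fun y hy => ?_⟩
  · rw [mul_pow, Real.cos_sq']
    ring
  · simp [a, Real.smoothTransition.zero_of_nonpos (div_nonpos_of_nonpos_of_nonneg hy hδ.le)]
  · simp [a, Real.smoothTransition.one_of_one_le ((one_le_div hδ).2 hy)]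

/-- `f` and `g` are smooth and `p`-periodic and satisfy the conditions that make the Rieffel
operator `U⁻¹ g + f + g U` idempotent, where `U` is the translation by `τ`. -/
structure IsRieffelPair (p τ : ℝ) (f g : ℝ → ℝ) : Prop where
  contDiff_diag : ContDiff ℝ (⊤ : ℕ∞) f
  contDiff_offDiag : ContDiff ℝ (⊤ : ℕ∞) g
  periodic_diag : Function.Periodic f p
  periodic_offDiag : Function.Periodic g p
  mul_shift : ∀ x, g x * g (x + τ) = 0
  mul_add_shift : ∀ x, g x * (f x + f (x + τ)) = g x
  sub_sq : ∀ x, f x - f x ^ 2 = g x ^ 2 + g (x - τ) ^ 2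

namespace IsRieffelPair

variable {p τ : ℝ} {f g : ℝ → ℝ}

lemma zero (p τ : ℝ) : IsRieffelPair p τ 0 0 := by
  constructor <;> simp [contDiff_zero_fun, Function.Periodic, Pi.zero_def]

lemma mem_Icc (h : IsRieffelPair p τ f g) (x : ℝ) : f x ∈ Icc (0 : ℝ) 1 := by
  have hsub_sq : 0 ≤ f x - f x ^ 2 := h.sub_sq x ▸ by positivity
  constructor <;> nlinarith

lemma add_int_mul_period (h : IsRieffelPair p τ f g) (n : ℤ) :
    IsRieffelPair p (τ + n * p) f g where
  __ := h
  mul_shift x := by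
    rw [← add_assoc, h.periodic_offDiag.int_mul n, h.mul_shift]
  mul_add_shift x := by
    rw [← add_assoc, h.periodic_diag.int_mul n, h.mul_add_shift]
  sub_sq x := by
    rw [← sub_sub, h.periodic_offDiag.sub_int_mul_eq n, h.sub_sq]

lemma comp_div (h : IsRieffelPair p τ f g) {θ : ℝ} (hθ : θ ≠ 0) :
    IsRieffelPair (p * θ) (τ * θ) (fun x => f (x / θ)) (fun x => g (x / θ)) where
  contDiff_diag := h.contDiff_diag.comp (contDiff_id.div_const θ)
  contDiff_offDiag := h.contDiff_offDiag.comp (contDiff_id.div_const θ)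
  periodic_diag := h.periodic_diag.div_const θ
  periodic_offDiag := h.periodic_offDiag.div_const θ
  mul_shift x := by
    rw [add_div, mul_div_cancel_right₀ _ hθ, h.mul_shift]
  mul_add_shift x := by
    rw [add_div, mul_div_cancel_right₀ _ hθ, h.mul_add_shift]
  sub_sq x := by
    rw [sub_div, mul_div_cancel_right₀ _ hθ, h.sub_sq]

end IsRieffelPair

namespace IsSmoothRamp

variable {δ ρ : ℝ} {s k : ℝ → ℝ}

lemma pos (h : IsSmoothRamp δ s k) : 0 < δ := by
  by_contra! hδ
  exact zero_ne_one ((h.eq_zero 0 le_rfl).symm.trans (h.eq_one 0 hδ))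

lemma root_eq_zero_of_nonpos (h : IsSmoothRamp δ s k) {y : ℝ} (hy : y ≤ 0) : k y = 0 := by
  simpa [h.eq_zero y hy] using h.root_sq y

lemma root_eq_zero_of_le (h : IsSmoothRamp δ s k) {y : ℝ} (hy : δ ≤ y) : k y = 0 := by
  simpa [h.eq_one y hy] using h.root_sq y

lemma contDiff_staircase_one (h : IsSmoothRamp δ s k) (hδ : δ < 1) :
    ContDiff ℝ (⊤ : ℕ∞) (staircase 1 s) :=
  contDiff_staircase h.contDiff h.eq_zero h.eq_one ⟨h.pos.le, hδ⟩

lemma contDiff_root_fract (h : IsSmoothRamp δ s k) (hδ : δ < 1) :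
    ContDiff ℝ (⊤ : ℕ∞) fun y => k (Int.fract y) :=
  staircase_zero k ▸ contDiff_staircase h.contDiff_root
    (fun _ => h.root_eq_zero_of_nonpos) (fun _ => h.root_eq_zero_of_le) ⟨h.pos.le, hδ⟩

lemma staircase_sub_staircase_cases (h : IsSmoothRamp δ s k) (hρ : ρ ∈ Icc δ (1 - δ))
    (y : ℝ) :
    (staircase 1 s y - staircase 1 s (y - ρ) = s (Int.fract y) ∧ k (Int.fract (y - ρ)) = 0) ∨
    (staircase 1 s y - staircase 1 s (y - ρ) = 1 - s (Int.fract (y - ρ)) ∧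
      k (Int.fract y) = 0) := by
  obtain ⟨hδρ, hρδ⟩ := hρ
  have hδ := h.pos
  have hfract_nonneg := Int.fract_nonneg y
  have hfract_lt := Int.fract_lt_one y
  have hdecomp := Int.floor_add_fract y
  rcases lt_or_ge (Int.fract y) ρ with hlt | hge
  · have hfloor : ⌊y - ρ⌋ = ⌊y⌋ - 1 :=
      Int.floor_eq_iff.2 ⟨by push_cast; linarith, by push_cast; linarith⟩
    have hclimbed : δ ≤ Int.fract (y - ρ) := by
      rw [Int.fract, hfloor]; push_cast; linarith
    refine .inl ⟨?_, h.root_eq_zero_of_le hclimbed⟩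
    rw [staircase, staircase, h.eq_one _ hclimbed, hfloor, sub_smul, one_smul]
    ring
  · have hfloor : ⌊y - ρ⌋ = ⌊y⌋ := Int.floor_eq_iff.2 ⟨by linarith, by linarith⟩
    have hclimbed : δ ≤ Int.fract y := hδρ.trans hge
    refine .inr ⟨?_, h.root_eq_zero_of_le hclimbed⟩
    rw [staircase, staircase, h.eq_one _ hclimbed, hfloor]
    ring

lemma isRieffelPair (h : IsSmoothRamp δ s k) (hρ : ρ ∈ Icc δ (1 - δ)) :
    IsRieffelPair 1 ρ (fun y => staircase 1 s y - staircase 1 s (y - ρ))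
      (fun y => k (Int.fract y)) := by
  have hδ : δ < 1 := by linarith [h.pos, hρ.1, hρ.2]
  have hcases := h.staircase_sub_staircase_cases hρ
  have hcases_shift (y : ℝ) := add_sub_cancel_right y ρ ▸ hcases (y + ρ)
  have hstaircase := h.contDiff_staircase_one hδ
  refine ⟨hstaircase.sub (hstaircase.comp (contDiff_id.sub contDiff_const)),
    h.contDiff_root_fract hδ, fun y => ?_, fun y => ?_, fun y => ?_, fun y => ?_, fun y => ?_⟩
  · simp only [add_sub_right_comm y 1 ρ, staircase_add_one, add_sub_add_right_eq_sub]
  · simp only [Int.fract_add_one]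
  · rcases hcases_shift y with ⟨-, hk⟩ | ⟨-, hk⟩ <;> simp [hk]
  · rcases hcases y with ⟨hrise, -⟩ | ⟨-, hk⟩
    · rcases hcases_shift y with ⟨-, hk⟩ | ⟨hfall, -⟩
      · simp [hk]
      · simp only [add_sub_cancel_right, hrise, hfall, add_sub_cancel, mul_one]
    · simp [hk]
  · rcases hcases y with ⟨hf, hk⟩ | ⟨hf, hk⟩ <;> simp only [hf, hk, h.root_sq] <;> ring

end IsSmoothRamp

theorem exists_isRieffelPair_integral_eq_fract (τ : ℝ) :
    ∃ f g, IsRieffelPair 1 τ f g ∧ ∫ y in 0..1, f y = Int.fract τ := by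
  rcases (Int.fract_nonneg τ).eq_or_lt with hzero | hpos
  · exact ⟨0, 0, .zero 1 τ, by simp [← hzero]⟩
  set ρ := Int.fract τ with hρ
  have hρ1 : ρ < 1 := Int.fract_lt_one τ
  let δ := min ρ (1 - ρ)
  have hδ : 0 < δ := lt_min hpos (sub_pos.2 hρ1)
  have hρ_mem : ρ ∈ Icc δ (1 - δ) := ⟨min_le_left _ _, le_sub_comm.1 (min_le_right _ _)⟩
  obtain ⟨s, k, hramp⟩ := exists_isSmoothRamp hδ
  refine ⟨fun y => staircase 1 s y - staircase 1 s (y - ρ), fun y => k (Int.fract y), ?_, ?_⟩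
  · simpa [hρ] using (hramp.isRieffelPair hρ_mem).add_int_mul_period ⌊τ⌋
  · have hcont := (hramp.contDiff_staircase_one (hρ_mem.1.trans_lt hρ1)).continuous
    simpa using integral_sub_comp_sub_of_add_eq (fun a b => hcont.intervalIntegrable a b)
      (staircase_add_one 1 s) ρ

theorem stmt10_general (θ : ℝ) (hθ : θ ≠ 0) :
    ∃ f g : ℝ → ℝ,
      ContDiff ℝ (⊤ : ℕ∞) f ∧ ContDiff ℝ (⊤ : ℕ∞) g
      ∧ Function.Periodic f θ ∧ Function.Periodic g θ
      ∧ (∀ x : ℝ, 0 ≤ f x ∧ f x ≤ 1)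
      ∧ (∀ x : ℝ, g x * g (x + 1) = 0)
      ∧ (∀ x : ℝ, g x * (f x + f (x + 1)) = g x)
      ∧ (∀ x : ℝ, f x - (f x) ^ 2 = (g x) ^ 2 + (g (x - 1)) ^ 2)
      ∧ (1 / θ) * ∫ x in (0:ℝ)..θ, f x = Int.fract (1 / θ) := by
  obtain ⟨f, g, hpair, hmean⟩ := exists_isRieffelPair_integral_eq_fract (1 / θ)
  have hscaled : IsRieffelPair θ 1 (fun x => f (x / θ)) (fun x => g (x / θ)) := by
    simpa [hθ] using hpair.comp_div hθ
  have hmean_scaled : (1 / θ) * ∫ x in (0:ℝ)..θ, f (x / θ) = Int.fract (1 / θ) := by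
    rw [intervalIntegral.integral_comp_div f hθ, zero_div, div_self hθ, hmean, smul_eq_mul,
      ← mul_assoc, one_div_mul_cancel hθ, one_mul]
  exact ⟨_, _, hscaled.contDiff_diag, hscaled.contDiff_offDiag, hscaled.periodic_diag,
    hscaled.periodic_offDiag, hscaled.mem_Icc, hscaled.mul_shift, hscaled.mul_add_shift,
    hscaled.sub_sq, hmean_scaled⟩

theorem stmt10 (θ : ℝ) (hθ0 : 0 < θ) (hθ1 : θ ≤ 1)
    (hirr : ¬∃ n : ℤ, 1 / θ = (n : ℝ)) :
    ∃ f g : ℝ → ℝ,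
      ContDiff ℝ (⊤ : ℕ∞) f ∧ ContDiff ℝ (⊤ : ℕ∞) g
      ∧ Function.Periodic f θ ∧ Function.Periodic g θ
      ∧ (∀ x : ℝ, 0 ≤ f x ∧ f x ≤ 1)
      ∧ (∀ x : ℝ, g x * g (x + 1) = 0)
      ∧ (∀ x : ℝ, g x * (f x + f (x + 1)) = g x)
      ∧ (∀ x : ℝ, f x - (f x) ^ 2 = (g x) ^ 2 + (g (x - 1)) ^ 2)
      ∧ (1 / θ) * ∫ x in (0:ℝ)..θ, f x = Int.fract (1 / θ) :=
  stmt10_general θ hθ0.ne'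
end
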